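/- arXiv:2309.13503 — 11 statements merged into one kernel-verified Lean document; each statement's English description precedes it below -/
import Mathlib

section
/- For every real k, the symbol of the sixth-order centered dimension-split stencil satisfies the factorization σ₆(k) = 6·sin²(k/2) − (3/5)·sin²(k) + (2/45)·sin²(3k/2) = sin²(k/2)·(4 + (4/3)·sin²(k/2) + (32/45)·sin⁴(k/2)). Consequently σ₆(k) > 0 for all k ∈ (0, π], and the maximum of σ₆ over [−π, π] equals 272/45 and is attained exactly at k = ±π. -/
/-!
Put `s = sin² (k / 2)`. The double and triple angle formulas give `sin² k = 4 s (1 - s)` and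
`sin² (3 k / 2) = s (3 - 4 s)²`, so the symbol is `4 s + (4/3) s² + (32/45) s³`. This cubic is
positive for `s > 0`, and its deficit from the value `272/45` at `s = 1` is `1 - s = cos² (k / 2)`
times a positive quadratic. Hence the bound, with equality exactly when `cos (k / 2) = 0`, which
on `[-π, π]` means `k = ±π`.
-/

open Real

/-- The symbol of the sixth-order centered dimension-split stencil. -/
noncomputable def sigma6 (k : ℝ) : ℝ :=
  6 * Real.sin (k / 2) ^ 2 - (3 / 5) * Real.sin k ^ 2 + (2 / 45) * Real.sin (3 * k / 2) ^ 2

lemma sigma6_eq_factored (k : ℝ) : sigma6 k =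
    Real.sin (k / 2) ^ 2 *
      (4 + (4 / 3) * Real.sin (k / 2) ^ 2 + (32 / 45) * Real.sin (k / 2) ^ 4) := by
  have h2 : Real.sin k ^ 2 = 4 * Real.sin (k / 2) ^ 2 * (1 - Real.sin (k / 2) ^ 2) := by
    rw [← Real.cos_sq', show k = 2 * (k / 2) by ring, Real.sin_two_mul]
    ring_nf
  have h3 : Real.sin (3 * k / 2) = 3 * Real.sin (k / 2) - 4 * Real.sin (k / 2) ^ 3 := by
    rw [← Real.sin_three_mul]
    ring_nf
  rw [sigma6, h2, h3]
  ring

/-- The deficit of the symbol from `272/45` is `cos² (k / 2)` times a positive factor, which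
yields both the upper bound and its equality case. -/
lemma sigma6_deficit (k : ℝ) : 272 / 45 - sigma6 k =
    Real.cos (k / 2) ^ 2 *
      (272 / 45 + (92 / 45) * Real.sin (k / 2) ^ 2 + (32 / 45) * Real.sin (k / 2) ^ 4) := by
  rw [sigma6_eq_factored, Real.cos_sq']
  ring

theorem sigma6_factorization_pos_max :
    (∀ k : ℝ, sigma6 k =
      Real.sin (k / 2) ^ 2 *
        (4 + (4 / 3) * Real.sin (k / 2) ^ 2 + (32 / 45) * Real.sin (k / 2) ^ 4)) ∧
    (∀ k : ℝ, k ∈ Set.Ioc 0 π → 0 < sigma6 k) ∧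
    (∀ k : ℝ, k ∈ Set.Icc (-π) π → sigma6 k ≤ 272 / 45) ∧
    (∀ k : ℝ, k ∈ Set.Icc (-π) π → (sigma6 k = 272 / 45 ↔ k = π ∨ k = -π)) := by
  refine ⟨sigma6_eq_factored, ?_, ?_, ?_⟩
  · rintro k ⟨h0, h1⟩
    have hs : 0 < Real.sin (k / 2) :=
      Real.sin_pos_of_pos_of_lt_pi (by linarith) (by linarith)
    rw [sigma6_eq_factored]
    positivity
  · intro k _
    have h : 0 ≤ 272 / 45 - sigma6 k := by
      rw [sigma6_deficit]
      positivity
    linarith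
  · rintro k ⟨h0, h1⟩
    have hd := sigma6_deficit k
    constructor
    · intro h
      by_contra! hne
      have hc : 0 < Real.cos (k / 2) := by
        have hl := lt_of_le_of_ne h0 hne.2.symm
        have hr := lt_of_le_of_ne h1 hne.1
        exact Real.cos_pos_of_mem_Ioo ⟨by linarith, by linarith⟩
      have hpos : 0 < 272 / 45 - sigma6 k := by
        rw [hd]
        positivity
      linarith
    · intro h
      have hc : Real.cos (k / 2) = 0 := by
        rcases h with rfl | rfl
        · exact Real.cos_pi_div_two
        · rw [neg_div, Real.cos_neg, Real.cos_pi_div_two]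
      rw [hc] at hd
      linarith
end

section
/- The sixth-order dimension-split symbol is a sixth-order accurate approximation of k²: as k → 0 one has σ₆(k) − k² = O(k⁸); more precisely, lim_{k→0} (σ₆(k) − k²)/k⁸ = −1/560. -/
/-!
By `sin² (x / 2) = (1 - cos x) / 2` the symbol is a combination of `cos k`, `cos (2 k)` and
`cos (3 k)`. Inserting the Taylor expansion of the cosine up to degree eight
(`cos_taylor_isLittleO`), the coefficients of `k ^ 4` and `k ^ 6` cancel, that of `k ^ 2` is one,
and that of `k ^ 8` is `-(3 - 3 / 10 * 2 ^ 8 + 1 / 45 * 3 ^ 8) / 8! = -72 / 40320 = -1 / 560`.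
Hence `sigma6 k - k ^ 2 + k ^ 8 / 560 = o(k ^ 8)`, which yields both claims.
-/

open Real Filter Asymptotics

lemma cos_taylor_isLittleO :
    (fun x : ℝ => Real.cos x - (1 - x ^ 2 / 2 + x ^ 4 / 24 - x ^ 6 / 720 + x ^ 8 / 40320))
      =o[nhds 0] fun x : ℝ => x ^ 8 := by
  have h := taylor_isLittleO_univ (x₀ := 0) (n := 8) Real.contDiff_cos
  simp only [sub_zero] at h
  refine h.congr_left fun x => ?_
  simp [taylorWithinEval_succ, iteratedDerivWithin_univ, iteratedDeriv_succ, Nat.factorial]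
  ring

/-- Rescaling the argument by `c ≠ 0` only changes the comparison function by a constant. -/
lemma cos_mul_taylor_isLittleO {c : ℝ} (hc : c ≠ 0) :
    (fun k : ℝ => Real.cos (c * k) - (1 - (c * k) ^ 2 / 2 + (c * k) ^ 4 / 24 - (c * k) ^ 6 / 720
      + (c * k) ^ 8 / 40320)) =o[nhds 0] fun k : ℝ => k ^ 8 := by
  have ht : Tendsto (fun k : ℝ => c * k) (nhds 0) (nhds 0) := by
    have : Continuous fun k : ℝ => c * k := by fun_prop
    simpa using this.tendsto 0
  have h := cos_taylor_isLittleO.comp_tendsto ht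
  simp only [Function.comp_def] at h
  simp only [mul_pow c _ 8] at h ⊢
  exact (isLittleO_const_mul_right_iff (pow_ne_zero 8 hc)).1 h

lemma sigma6_eq_cos (k : ℝ) :
    sigma6 k = 3 * (1 - Real.cos (1 * k)) - 3 / 10 * (1 - Real.cos (2 * k))
      + 1 / 45 * (1 - Real.cos (3 * k)) := by
  have e1 : (1 : ℝ) * k = 2 * (k / 2) := by ring
  have e3 : 3 * k = 2 * (3 * k / 2) := by ring
  rw [sigma6, e1, e3, Real.cos_two_mul, Real.cos_two_mul, Real.cos_two_mul, Real.cos_sq',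
    Real.cos_sq', Real.cos_sq', ← e3]
  ring

lemma sigma6_expansion :
    (fun k : ℝ => sigma6 k - k ^ 2 - (-1 / 560) * k ^ 8) =o[nhds 0] fun k : ℝ => k ^ 8 := by
  have h1 := (cos_mul_taylor_isLittleO one_ne_zero).const_mul_left (-3)
  have h2 := (cos_mul_taylor_isLittleO two_ne_zero).const_mul_left (3 / 10)
  have h3 := (cos_mul_taylor_isLittleO three_ne_zero).const_mul_left (-1 / 45)
  refine ((h1.add h2).add h3).congr_left fun k => ?_
  rw [sigma6_eq_cos]
  ring

theorem sigma6_consistency :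
    ((fun k : ℝ => sigma6 k - k ^ 2) =O[nhds 0] fun k : ℝ => k ^ 8) ∧
    Tendsto (fun k : ℝ => (sigma6 k - k ^ 2) / k ^ 8) (nhdsWithin 0 {0}ᶜ)
      (nhds (-1 / 560)) := by
  constructor
  · have h := sigma6_expansion.isBigO.add
      ((isBigO_refl (fun k : ℝ => k ^ 8) (nhds 0)).const_mul_left (-1 / 560))
    exact h.congr_left fun k => by ring
  · have h := (sigma6_expansion.mono (nhdsWithin_le_nhds (s := {0}ᶜ))).tendsto_div_nhds_zero
    have h' := h.add_const (-1 / 560)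
    rw [zero_add] at h'
    refine h'.congr' ?_
    filter_upwards [self_mem_nhdsWithin] with k hk
    have hk0 : k ≠ 0 := hk
    field_simp
    ring
end

section
/- The eighth-order dimension-split symbol is an eighth-order accurate approximation of k²: as k → 0 one has σ₈(k) − k² = O(k¹⁰); more precisely, lim_{k→0} (σ₈(k) − k²)/k¹⁰ = −1/3150. -/
/-!
By `sin² y = (1 - cos 2y) / 2`, the symbol `sigma8 k` is a combination of
`1 - cos (j k)` for `j = 1, 2, 3, 4`. Each cosine agrees with its Taylor polynomial of degree 10
up to `o(k ^ 10)` (`cos_taylor_ten`). In the combination of these polynomials the stencil weights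
reproduce `k ^ 2`, cancel the powers 4, 6 and 8, and leave `-1152 / 10! = -1 / 3150` as the
coefficient of `k ^ 10`. Both claims follow from the expansion `sigma8_expansion`.
-/

open Real Filter Asymptotics

/-- The symbol of the eighth-order centered dimension-split stencil. -/
noncomputable def sigma8 (k : ℝ) : ℝ :=
  (32 / 5) * Real.sin (k / 2) ^ 2 - (4 / 5) * Real.sin k ^ 2
    + (32 / 315) * Real.sin (3 * k / 2) ^ 2 - (1 / 140) * Real.sin (2 * k) ^ 2

/-- The Taylor polynomial of degree 10 of `cos` at the origin. -/
noncomputable def cosTaylorTen (x : ℝ) : ℝ :=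
  1 - x ^ 2 / 2 + x ^ 4 / 24 - x ^ 6 / 720 + x ^ 8 / 40320 - x ^ 10 / 3628800

lemma cos_taylor_ten :
    (fun x : ℝ => Real.cos x - cosTaylorTen x) =o[nhds 0] fun x : ℝ => x ^ 10 := by
  have h := taylor_isLittleO_univ (f := Real.cos) (x₀ := 0) (n := 10) Real.contDiff_cos
  have even : ∀ n : ℕ, iteratedDeriv (2 * n) Real.cos 0 = (-1) ^ n := by
    intro n; simp [Real.iteratedDeriv_even_cos]
  have odd : ∀ n : ℕ, iteratedDeriv (2 * n + 1) Real.cos 0 = 0 := by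
    intro n; simp
  have e1 := even 1
  have e2 := even 2
  have e3 := even 3
  have e4 := even 4
  have e5 := even 5
  have o0 := odd 0
  have o1 := odd 1
  have o2 := odd 2
  have o3 := odd 3
  have o4 := odd 4
  norm_num only at e1 e2 e3 e4 e5 o0 o1 o2 o3 o4
  refine h.congr (fun x => ?_) (fun x => by simp)
  simp only [taylor_within_apply, iteratedDerivWithin_univ, Finset.sum_range_succ,
    Finset.sum_range_zero, e1, e2, e3, e4, e5, o0, o1, o2, o3, o4, iteratedDeriv_zero,
    Real.cos_zero, smul_eq_mul, Nat.factorial, cosTaylorTen]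
  push_cast
  ring

lemma cos_mul_taylor_ten (c : ℝ) :
    (fun k : ℝ => Real.cos (c * k) - cosTaylorTen (c * k)) =o[nhds 0] fun k : ℝ => k ^ 10 := by
  have ht : Tendsto (fun k : ℝ => c * k) (nhds 0) (nhds 0) := by
    have : Continuous fun k : ℝ => c * k := by fun_prop
    simpa using this.tendsto 0
  refine (cos_taylor_ten.comp_tendsto ht).trans_isBigO ?_
  refine (isBigO_const_mul_self (c ^ 10) (fun k : ℝ => k ^ 10) (nhds 0)).congr_left fun k => ?_
  simp [mul_pow]

lemma sigma8_expansion :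
    (fun k : ℝ => sigma8 k - k ^ 2 - (-1 / 3150) * k ^ 10) =o[nhds 0] fun k : ℝ => k ^ 10 := by
  have h := ((((cos_mul_taylor_ten 1).const_mul_left (-16 / 5)).add
    ((cos_mul_taylor_ten 2).const_mul_left (2 / 5))).add
    ((cos_mul_taylor_ten 3).const_mul_left (-16 / 315))).add
    ((cos_mul_taylor_ten 4).const_mul_left (1 / 280))
  refine h.congr_left fun k => ?_
  simp only [sigma8, Real.sin_sq_eq_half_sub, cosTaylorTen]
  rw [show 2 * (k / 2) = 1 * k by ring, show 2 * (3 * k / 2) = 3 * k by ring,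
    show 2 * (2 * k) = 4 * k by ring]
  ring

theorem sigma8_consistency :
    ((fun k : ℝ => sigma8 k - k ^ 2) =O[nhds 0] fun k : ℝ => k ^ 10) ∧
    Tendsto (fun k : ℝ => (sigma8 k - k ^ 2) / k ^ 10) (nhdsWithin 0 {0}ᶜ)
      (nhds (-1 / 3150)) := by
  constructor
  · refine (sigma8_expansion.isBigO.add
      (isBigO_const_mul_self (-1 / 3150) (fun k : ℝ => k ^ 10) (nhds 0))).congr_left fun k => ?_
    ring
  · have h := (sigma8_expansion.tendsto_div_nhds_zero.mono_left
      (nhdsWithin_le_nhds (s := {0}ᶜ))).add_const (-1 / 3150)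
    rw [zero_add] at h
    refine h.congr' ?_
    filter_upwards [self_mem_nhdsWithin] with k hk
    have hk : k ≠ 0 := hk
    field_simp
    ring
end

section
/- The fourth-order Mehrstellen discretization satisfies the fourth-order Mehrstellen consistency condition: as |k| → 0 in ℝ³, σ_L(k) − |k|²·σ_R(k) = O(|k|⁶), i.e. there exist constants C > 0 and δ > 0 such that |σ_L(k) − (k₁² + k₂² + k₃²)·σ_R(k)| ≤ C·|k|⁶ whenever |k| < δ. -/
/-!
Write `aᵢ = kᵢ²` and `S = a₁ + a₂ + a₃`. Substituting the quartic Taylor polynomial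
`1 - aᵢ/2 + aᵢ²/24` for each `cos kᵢ`, both `σ_L` and `S * σ_R` equal `S - S²/12` up to terms of
degree at least three in the `aᵢ`. The Taylor error of the cosine (`cos_sextic_bound`) is
`O(aᵢ³)`, and it enters the difference multiplied by bounded coefficients. Hence, for `S ≤ 1`,
the difference is `O(S³)`, and `S³ = |k|⁶`.
-/

open Real

/-- Left-hand-side symbol of the fourth-order Mehrstellen stencil. -/
noncomputable def sigmaL4 (k₁ k₂ k₃ : ℝ) : ℝ :=
  4 - (2 / 3) * (Real.cos k₁ + Real.cos k₂ + Real.cos k₃)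
    - (2 / 3) * (Real.cos k₁ * Real.cos k₂ + Real.cos k₁ * Real.cos k₃
        + Real.cos k₂ * Real.cos k₃)

/-- Right-hand-side symbol of the fourth-order Mehrstellen stencil. -/
noncomputable def sigmaR4 (k₁ k₂ k₃ : ℝ) : ℝ :=
  1 / 2 + (1 / 6) * (Real.cos k₁ + Real.cos k₂ + Real.cos k₃)

/-- The quartic Taylor polynomial approximates `cos` to sixth order: take real parts in
the remainder estimate for the exponential series at `x * I`. -/
lemma cos_sextic_bound {x : ℝ} (hx : |x| ≤ 1) :
    |Real.cos x - (1 - x ^ 2 / 2 + (x ^ 2) ^ 2 / 24)| ≤ (x ^ 2) ^ 3 := by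
  have hz : ‖(x : ℂ) * Complex.I‖ ≤ 1 := by simpa using hx
  have hb := Complex.exp_bound hz (n := 6) (by norm_num)
  have hre := (Complex.abs_re_le_norm _).trans hb
  have hexp : (Complex.exp (x * Complex.I)).re = Real.cos x := Complex.exp_ofReal_mul_I_re x
  have hsum : (∑ m ∈ Finset.range 6, ((x : ℂ) * Complex.I) ^ m / (m.factorial : ℂ))
      = ((1 - x ^ 2 / 2 + (x ^ 2) ^ 2 / 24 : ℝ) : ℂ)
        + ((x - x ^ 3 / 6 + x ^ 5 / 120 : ℝ) : ℂ) * Complex.I := by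
    have h3 : Complex.I ^ 3 = -Complex.I := Complex.I_pow_three
    have h4 : Complex.I ^ 4 = 1 := Complex.I_pow_four
    have h5 : Complex.I ^ 5 = Complex.I := by rw [pow_succ, h4, one_mul]
    simp only [Finset.sum_range_succ, Finset.sum_range_zero, mul_pow, Complex.I_sq, h3, h4, h5,
      Nat.factorial]
    push_cast
    ring
  rw [hsum, Complex.sub_re, hexp, Complex.add_re, Complex.ofReal_re, Complex.re_ofReal_mul,
    Complex.I_re, mul_zero, add_zero] at hre
  refine hre.trans ?_
  have hn : ‖(x : ℂ) * Complex.I‖ ^ 6 = (x ^ 2) ^ 3 := by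
    rw [norm_mul, Complex.norm_I, mul_one, Complex.norm_real, Real.norm_eq_abs, ← sq_abs x]
    ring
  rw [hn]
  refine mul_le_of_le_one_right (by positivity) ?_
  norm_num [Nat.factorial]

/-- Degree-three bound for the product of two perturbed quartic Taylor polynomials
(in the squared variables `a`, `b`), after removal of its terms of degree at most two. -/
lemma prod_remainder_bound {a b s c d : ℝ} (ha : 0 ≤ a) (hb : 0 ≤ b) (has : a ≤ s) (hbs : b ≤ s)
    (hs : s ≤ 1) (hc : |c - (1 - a / 2 + a ^ 2 / 24)| ≤ s ^ 3)
    (hd : |d - (1 - b / 2 + b ^ 2 / 24)| ≤ s ^ 3) (hd1 : |d| ≤ 1) :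
    |c * d - (1 - (a + b) / 2 + a * b / 4 + (a ^ 2 + b ^ 2) / 24)| ≤ 4 * s ^ 3 := by
  have hs0 : 0 ≤ s := ha.trans has
  have key : c * d - (1 - (a + b) / 2 + a * b / 4 + (a ^ 2 + b ^ 2) / 24)
      = (c - (1 - a / 2 + a ^ 2 / 24)) * d
        + (1 - a / 2 + a ^ 2 / 24) * (d - (1 - b / 2 + b ^ 2 / 24))
        + (a ^ 2 * b ^ 2 / 576 - (a * b ^ 2 + a ^ 2 * b) / 48) := by ring
  have hp : |1 - a / 2 + a ^ 2 / 24| ≤ 1 := by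
    rw [abs_le]; constructor <;> nlinarith
  have h1 : |(c - (1 - a / 2 + a ^ 2 / 24)) * d| ≤ s ^ 3 := by
    rw [abs_mul]
    exact (mul_le_of_le_one_right (abs_nonneg _) hd1).trans hc
  have h2 : |(1 - a / 2 + a ^ 2 / 24) * (d - (1 - b / 2 + b ^ 2 / 24))| ≤ s ^ 3 := by
    rw [abs_mul]
    exact (mul_le_of_le_one_left (abs_nonneg _) hp).trans hd
  have e1 : a * b ^ 2 ≤ s ^ 3 := by
    calc a * b ^ 2 ≤ s * s ^ 2 := by gcongr
      _ = s ^ 3 := by ring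
  have e2 : a ^ 2 * b ≤ s ^ 3 := by
    calc a ^ 2 * b ≤ s ^ 2 * s := by gcongr
      _ = s ^ 3 := by ring
  have e3 : a ^ 2 * b ^ 2 ≤ s ^ 3 := by
    calc a ^ 2 * b ^ 2 ≤ s ^ 2 * s ^ 2 := by gcongr
      _ = s ^ 3 * s := by ring
      _ ≤ s ^ 3 := mul_le_of_le_one_right (by positivity) hs
  have p1 : 0 ≤ a * b ^ 2 := by positivity
  have p2 : 0 ≤ a ^ 2 * b := by positivity
  have p3 : 0 ≤ a ^ 2 * b ^ 2 := by positivity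
  rw [key]
  rw [abs_le] at h1 h2 ⊢
  constructor <;> linarith [h1.1, h1.2, h2.1, h2.2]

theorem mehrstellen4_consistency :
    ∃ C > (0 : ℝ), ∃ δ > (0 : ℝ), ∀ k₁ k₂ k₃ : ℝ,
      Real.sqrt (k₁ ^ 2 + k₂ ^ 2 + k₃ ^ 2) < δ →
      |sigmaL4 k₁ k₂ k₃ - (k₁ ^ 2 + k₂ ^ 2 + k₃ ^ 2) * sigmaR4 k₁ k₂ k₃| ≤
        C * Real.sqrt (k₁ ^ 2 + k₂ ^ 2 + k₃ ^ 2) ^ 6 := by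
  refine ⟨20, by norm_num, 1, by norm_num, ?_⟩
  intro k₁ k₂ k₃ hk
  have hS0 : 0 ≤ k₁ ^ 2 + k₂ ^ 2 + k₃ ^ 2 := by positivity
  have hpow : Real.sqrt (k₁ ^ 2 + k₂ ^ 2 + k₃ ^ 2) ^ 6 = (k₁ ^ 2 + k₂ ^ 2 + k₃ ^ 2) ^ 3 := by
    rw [show (6 : ℕ) = 2 * 3 from rfl, pow_mul, Real.sq_sqrt hS0]
  have hS1 : k₁ ^ 2 + k₂ ^ 2 + k₃ ^ 2 ≤ 1 := by
    rw [Real.sqrt_lt' one_pos] at hk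
    linarith
  rw [hpow]
  have ha := sq_nonneg k₁
  have hb := sq_nonneg k₂
  have hc := sq_nonneg k₃
  have ea := cos_sextic_bound ((sq_le_one_iff_abs_le_one k₁).1 (by linarith))
  have eb := cos_sextic_bound ((sq_le_one_iff_abs_le_one k₂).1 (by linarith))
  have ec := cos_sextic_bound ((sq_le_one_iff_abs_le_one k₃).1 (by linarith))
  have ma := Real.abs_cos_le_one k₁
  have mb := Real.abs_cos_le_one k₂
  have mc := Real.abs_cos_le_one k₃
  unfold sigmaL4 sigmaR4
  generalize Real.cos k₁ = x at *
  generalize Real.cos k₂ = y at *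
  generalize Real.cos k₃ = z at *
  generalize k₁ ^ 2 = a at *
  generalize k₂ ^ 2 = b at *
  generalize k₃ ^ 2 = c at *
  obtain ⟨s, hs⟩ : ∃ s, s = a + b + c := ⟨_, rfl⟩
  have has : a ≤ s := by linarith
  have hbs : b ≤ s := by linarith
  have hcs : c ≤ s := by linarith
  rw [← hs] at hS0 hS1 ⊢
  replace ea := ea.trans (pow_le_pow_left₀ ha has 3)
  replace eb := eb.trans (pow_le_pow_left₀ hb hbs 3)
  replace ec := ec.trans (pow_le_pow_left₀ hc hcs 3)
  have pab := prod_remainder_bound ha hb has hbs hS1 ea eb mb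
  have pac := prod_remainder_bound ha hc has hcs hS1 ea ec mc
  have pbc := prod_remainder_bound hb hc hbs hcs hS1 eb ec mc
  have hse : |s * ((x - (1 - a / 2 + a ^ 2 / 24)) + (y - (1 - b / 2 + b ^ 2 / 24))
      + (z - (1 - c / 2 + c ^ 2 / 24)))| ≤ 3 * s ^ 3 := by
    rw [abs_mul, abs_of_nonneg hS0]
    refine (mul_le_of_le_one_left (abs_nonneg _) hS1).trans ?_
    refine (abs_add_three _ _ _).trans ?_
    linarith
  have hq0 : 0 ≤ s * (a ^ 2 + b ^ 2 + c ^ 2) := by positivity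
  have hq : s * (a ^ 2 + b ^ 2 + c ^ 2) ≤ 3 * s ^ 3 := by
    calc s * (a ^ 2 + b ^ 2 + c ^ 2) ≤ s * (s ^ 2 + s ^ 2 + s ^ 2) := by gcongr
      _ = 3 * s ^ 3 := by ring
  -- The terms of degree at most two in `a`, `b`, `c` cancel.
  have key : 4 - 2 / 3 * (x + y + z) - 2 / 3 * (x * y + x * z + y * z)
        - s * (1 / 2 + 1 / 6 * (x + y + z))
      = -(2 / 3) * ((x - (1 - a / 2 + a ^ 2 / 24)) + (y - (1 - b / 2 + b ^ 2 / 24))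
          + (z - (1 - c / 2 + c ^ 2 / 24)))
        - 2 / 3 * ((x * y - (1 - (a + b) / 2 + a * b / 4 + (a ^ 2 + b ^ 2) / 24))
          + (x * z - (1 - (a + c) / 2 + a * c / 4 + (a ^ 2 + c ^ 2) / 24))
          + (y * z - (1 - (b + c) / 2 + b * c / 4 + (b ^ 2 + c ^ 2) / 24)))
        - 1 / 6 * (s * ((x - (1 - a / 2 + a ^ 2 / 24)) + (y - (1 - b / 2 + b ^ 2 / 24))
          + (z - (1 - c / 2 + c ^ 2 / 24))))
        - 1 / 144 * (s * (a ^ 2 + b ^ 2 + c ^ 2)) := by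
    subst hs
    ring
  rw [key]
  rw [abs_le] at ea eb ec pab pac pbc hse ⊢
  constructor <;>
    linarith [ea.1, ea.2, eb.1, eb.2, ec.1, ec.2, pab.1, pab.2, pac.1, pac.2, pbc.1, pbc.2,
      hse.1, hse.2]
end

section
/- The sixth-order Mehrstellen discretization satisfies the sixth-order Mehrstellen consistency condition: as |k| → 0 in ℝ³, σ_L(k) − |k|²·σ_R(k) = O(|k|⁸), i.e. there exist constants C > 0 and δ > 0 such that |σ_L(k) − (k₁² + k₂² + k₃²)·σ_R(k)| ≤ C·|k|⁸ whenever |k| < δ. -/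
/-!
By the product-to-sum formulas both symbols are linear combinations of cosines `cos (m · k)` with
integer vectors `m`. Replace each cosine in `sigmaL6` by its Taylor polynomial of degree 6 and each
cosine in `sigmaR6` by its Taylor polynomial of degree 4. The resulting polynomials satisfy
`L = |k|² R` exactly: this identity expresses the sixth-order design of the stencil. Hence the
consistency error is a linear combination of Taylor remainders, of size `O(|k|⁸)` for `sigmaL6` and
`|k|² O(|k|⁶)` for `|k|² sigmaR6` (`taylor_remainders`, a consequence of `Complex.exp_bound`).
-/

open Real

/-- Left-hand-side symbol of the sixth-order Mehrstellen stencil. -/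
noncomputable def sigmaL6 (k₁ k₂ k₃ : ℝ) : ℝ :=
  64 / 15 - (14 / 15) * (Real.cos k₁ + Real.cos k₂ + Real.cos k₃)
    - (2 / 5) * (Real.cos k₁ * Real.cos k₂ + Real.cos k₁ * Real.cos k₃
        + Real.cos k₂ * Real.cos k₃)
    - (4 / 15) * (Real.cos k₁ * Real.cos k₂ * Real.cos k₃)

/-- Right-hand-side symbol of the sixth-order Mehrstellen stencil. -/
noncomputable def sigmaR6 (k₁ k₂ k₃ : ℝ) : ℝ :=
  67 / 120 + (1 / 9) * (Real.cos k₁ + Real.cos k₂ + Real.cos k₃)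
    - (1 / 120) * (Real.cos (2 * k₁) + Real.cos (2 * k₂) + Real.cos (2 * k₃))
    + (2 / 45) * (Real.cos k₁ * Real.cos k₂ + Real.cos k₁ * Real.cos k₃
        + Real.cos k₂ * Real.cos k₃)

/-- Degree-6 Taylor remainder of the cosine. -/
noncomputable def cosRem6 (x : ℝ) : ℝ :=
  Real.cos x - (1 - x ^ 2 / 2 + x ^ 4 / 24 - x ^ 6 / 720)

/-- Degree-4 Taylor remainder of the cosine. -/
noncomputable def cosRem4 (x : ℝ) : ℝ :=
  Real.cos x - (1 - x ^ 2 / 2 + x ^ 4 / 24)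

lemma abs_cosRem6_le {x : ℝ} (hx : |x| ≤ 1) : |cosRem6 x| ≤ |x| ^ 8 := by
  have hn : ‖(x : ℂ) * Complex.I‖ = |x| := by simp
  have h := Complex.exp_bound (x := (x : ℂ) * Complex.I) (hn.trans_le hx) (n := 8) (by norm_num)
  rw [hn] at h
  have hre := (Complex.abs_re_le_norm _).trans h
  -- The real part of the exponential remainder at `x * I` is the cosine remainder.
  have he : (Complex.exp ((x : ℂ) * Complex.I)
      - ∑ m ∈ Finset.range 8, ((x : ℂ) * Complex.I) ^ m / (m.factorial : ℂ)).re = cosRem6 x := by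
    rw [Complex.sub_re, Complex.exp_ofReal_mul_I_re, cosRem6]
    congr 1
    have : ∑ m ∈ Finset.range 8, ((x : ℂ) * Complex.I) ^ m / (m.factorial : ℂ)
        = ((1 - x ^ 2 / 2 + x ^ 4 / 24 - x ^ 6 / 720 : ℝ) : ℂ)
          + ((x - x ^ 3 / 6 + x ^ 5 / 120 - x ^ 7 / 5040 : ℝ) : ℂ) * Complex.I := by
      have h2 := Complex.I_sq
      have h3 := Complex.I_pow_three
      have h4 := Complex.I_pow_four
      have h5 : Complex.I ^ 5 = Complex.I := by rw [pow_succ, h4, one_mul]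
      have h6 : Complex.I ^ 6 = -1 := by rw [pow_succ, h5, Complex.I_mul_I]
      have h7 : Complex.I ^ 7 = -Complex.I := by rw [pow_succ, h6]; ring
      simp only [Finset.sum_range_succ, Finset.sum_range_zero, mul_pow, h2, h3, h4, h5, h6, h7,
        Nat.factorial]
      push_cast
      ring
    rw [this, Complex.add_re, Complex.ofReal_re, Complex.re_ofReal_mul, Complex.I_re]
    ring
  rw [he] at hre
  refine hre.trans (mul_le_of_le_one_right (by positivity) ?_)
  norm_num [Nat.factorial]

lemma abs_cosRem4_le {x : ℝ} (hx : |x| ≤ 1) : |cosRem4 x| ≤ 2 * |x| ^ 6 := by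
  have h6 := abs_cosRem6_le hx
  have h8 : |x| ^ 8 ≤ |x| ^ 6 := pow_le_pow_of_le_one (abs_nonneg x) hx (by norm_num)
  have he : cosRem4 x = cosRem6 x - x ^ 6 / 720 := by unfold cosRem4 cosRem6; ring
  have hp : |x ^ 6 / 720| = |x| ^ 6 / 720 := by rw [abs_div, abs_pow]; norm_num
  have h0 : 0 ≤ |x| ^ 6 := by positivity
  rw [he]
  have := abs_sub (cosRem6 x) (x ^ 6 / 720)
  linarith

/-- The combinations of remainders that occur in the consistency error, for arguments `x = m · k`
with `|x| ≤ 3 |k|`; here `s` stands for `|k|`. -/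
lemma taylor_remainders {s x : ℝ} (hs1 : s ≤ 1 / 3) (hx : |x| ≤ 3 * s) :
    |cosRem6 x| ≤ 6561 * s ^ 8 ∧ |s ^ 2 * cosRem4 x| ≤ 1458 * s ^ 8 := by
  have hx1 : |x| ≤ 1 := by linarith
  constructor
  · calc |cosRem6 x| ≤ |x| ^ 8 := abs_cosRem6_le hx1
      _ ≤ (3 * s) ^ 8 := by gcongr
      _ = 6561 * s ^ 8 := by ring
  · rw [abs_mul, abs_of_nonneg (sq_nonneg s)]
    calc s ^ 2 * |cosRem4 x| ≤ s ^ 2 * (2 * |x| ^ 6) := by gcongr; exact abs_cosRem4_le hx1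
      _ ≤ s ^ 2 * (2 * (3 * s) ^ 6) := by gcongr
      _ = 1458 * s ^ 8 := by ring

/-- The consistency error is a linear combination of Taylor remainders. -/
lemma consistency_error_eq (a b c : ℝ) :
    sigmaL6 a b c - (a ^ 2 + b ^ 2 + c ^ 2) * sigmaR6 a b c =
      -(14 / 15) * (cosRem6 a + cosRem6 b + cosRem6 c)
      - (1 / 5) * (cosRem6 (a + b) + cosRem6 (a - b) + cosRem6 (a + c) + cosRem6 (a - c)
          + cosRem6 (b + c) + cosRem6 (b - c))
      - (1 / 15) * (cosRem6 (a + b + c) + cosRem6 (a + b - c) + cosRem6 (a - b + c)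
          + cosRem6 (a - b - c))
      - (a ^ 2 + b ^ 2 + c ^ 2) * (
          (1 / 9) * (cosRem4 a + cosRem4 b + cosRem4 c)
          - (1 / 120) * (cosRem4 (2 * a) + cosRem4 (2 * b) + cosRem4 (2 * c))
          + (1 / 45) * (cosRem4 (a + b) + cosRem4 (a - b) + cosRem4 (a + c) + cosRem4 (a - c)
            + cosRem4 (b + c) + cosRem4 (b - c))) := by
  unfold sigmaL6 sigmaR6 cosRem6 cosRem4
  simp only [Real.cos_add, Real.cos_sub, Real.sin_add, Real.sin_sub]
  ring

theorem mehrstellen6_consistency :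
    ∃ C > (0 : ℝ), ∃ δ > (0 : ℝ), ∀ k₁ k₂ k₃ : ℝ,
      Real.sqrt (k₁ ^ 2 + k₂ ^ 2 + k₃ ^ 2) < δ →
      |sigmaL6 k₁ k₂ k₃ - (k₁ ^ 2 + k₂ ^ 2 + k₃ ^ 2) * sigmaR6 k₁ k₂ k₃| ≤
        C * Real.sqrt (k₁ ^ 2 + k₂ ^ 2 + k₃ ^ 2) ^ 8 := by
  refine ⟨100000, by norm_num, 1 / 3, by norm_num, fun a b c hs => ?_⟩
  set s := Real.sqrt (a ^ 2 + b ^ 2 + c ^ 2) with hsdef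
  have hS : a ^ 2 + b ^ 2 + c ^ 2 = s ^ 2 := (Real.sq_sqrt (by positivity)).symm
  have ha : |a| ≤ s := Real.abs_le_sqrt (by linarith [sq_nonneg b, sq_nonneg c])
  have hb : |b| ≤ s := Real.abs_le_sqrt (by linarith [sq_nonneg a, sq_nonneg c])
  have hc : |c| ≤ s := Real.abs_le_sqrt (by linarith [sq_nonneg a, sq_nonneg b])
  obtain ⟨ha1, ha2⟩ := abs_le.mp ha
  obtain ⟨hb1, hb2⟩ := abs_le.mp hb
  obtain ⟨hc1, hc2⟩ := abs_le.mp hc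
  have rem : ∀ x, -(3 * s) ≤ x → x ≤ 3 * s →
      (-(6561 * s ^ 8) ≤ cosRem6 x ∧ cosRem6 x ≤ 6561 * s ^ 8) ∧
      (-(1458 * s ^ 8) ≤ s ^ 2 * cosRem4 x ∧ s ^ 2 * cosRem4 x ≤ 1458 * s ^ 8) :=
    fun x h1 h2 => (taylor_remainders hs.le (abs_le.mpr ⟨h1, h2⟩)).imp abs_le.mp abs_le.mp
  obtain ⟨⟨_, _⟩, _, _⟩ := rem a (by linarith) (by linarith)
  obtain ⟨⟨_, _⟩, _, _⟩ := rem b (by linarith) (by linarith)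
  obtain ⟨⟨_, _⟩, _, _⟩ := rem c (by linarith) (by linarith)
  obtain ⟨⟨_, _⟩, _, _⟩ := rem (2 * a) (by linarith) (by linarith)
  obtain ⟨⟨_, _⟩, _, _⟩ := rem (2 * b) (by linarith) (by linarith)
  obtain ⟨⟨_, _⟩, _, _⟩ := rem (2 * c) (by linarith) (by linarith)
  obtain ⟨⟨_, _⟩, _, _⟩ := rem (a + b) (by linarith) (by linarith)
  obtain ⟨⟨_, _⟩, _, _⟩ := rem (a - b) (by linarith) (by linarith)
  obtain ⟨⟨_, _⟩, _, _⟩ := rem (a + c) (by linarith) (by linarith)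
  obtain ⟨⟨_, _⟩, _, _⟩ := rem (a - c) (by linarith) (by linarith)
  obtain ⟨⟨_, _⟩, _, _⟩ := rem (b + c) (by linarith) (by linarith)
  obtain ⟨⟨_, _⟩, _, _⟩ := rem (b - c) (by linarith) (by linarith)
  obtain ⟨⟨_, _⟩, _, _⟩ := rem (a + b + c) (by linarith) (by linarith)
  obtain ⟨⟨_, _⟩, _, _⟩ := rem (a + b - c) (by linarith) (by linarith)
  obtain ⟨⟨_, _⟩, _, _⟩ := rem (a - b + c) (by linarith) (by linarith)
  obtain ⟨⟨_, _⟩, _, _⟩ := rem (a - b - c) (by linarith) (by linarith)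
  have h8 : 0 ≤ s ^ 8 := by positivity
  rw [consistency_error_eq, hS]
  -- After distributing `s ^ 2`, the error is linear in the bounded quantities above.
  rw [abs_le]
  constructor <;> linarith
end

section
/- Let a₀, a₁ be real numbers with a₁ ≠ 0 and λ := −a₀/(2a₁) > 1, and set r := λ − √(λ² − 1), so that r ∈ (0, 1). Then the function G: ℤ → ℝ defined by G(n) = r^{|n|} / (a₁·(r − r⁻¹)) satisfies a₁·G(n−1) + a₀·G(n) + a₁·G(n+1) = δ(n) for every n ∈ ℤ, and G is the unique bounded function on ℤ with this property. -/
open Real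

/-!
The number `r` is the root in `(0, 1)` of `r² - 2λr + 1 = 0`, the characteristic equation of the
recurrence, so `r ^ |n|` solves the homogeneous equation away from `n = 0`; at `n = 0` the left-hand
side is `a₁ (r - r⁻¹)` times the normalising factor. For uniqueness, the difference `D` of two bounded
solutions satisfies `D (n - 1) + D (n + 1) = 2λ D n`, so any bound `M` for `|D|` improves to `M / λ`.
Iterating with `λ > 1` forces `D = 0` (`bounded_homogeneous_eq_zero`).
-/

lemma bounded_homogeneous_eq_zero {lam : ℝ} (hlam : 1 < lam) {D : ℤ → ℝ} {M : ℝ}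
    (hM : ∀ n, |D n| ≤ M) (hD : ∀ n, D (n - 1) + D (n + 1) = 2 * lam * D n) (n : ℤ) :
    D n = 0 := by
  have h0 : 0 < lam := by linarith
  have key : ∀ k : ℕ, ∀ n, |D n| ≤ M * lam⁻¹ ^ k := by
    intro k
    induction k with
    | zero => simpa using hM
    | succ k ih =>
      intro n
      have h1 : 2 * lam * |D n| ≤ |D (n - 1)| + |D (n + 1)| := by
        have h := abs_add_le (D (n - 1)) (D (n + 1))
        rwa [hD, abs_mul, abs_of_pos (by positivity : 0 < 2 * lam)] at h
      have h2 : lam * |D n| ≤ M * lam⁻¹ ^ k := by linarith [ih (n - 1), ih (n + 1)]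
      rw [pow_succ, ← mul_assoc, ← div_eq_mul_inv, le_div_iff₀ h0]
      linarith
  have hlim : Filter.Tendsto (fun k : ℕ => M * lam⁻¹ ^ k) Filter.atTop (nhds 0) := by
    simpa using (tendsto_pow_atTop_nhds_zero_of_lt_one (inv_nonneg.2 h0.le)
      (inv_lt_one_of_one_lt₀ hlam)).const_mul M
  exact abs_nonpos_iff.1 (ge_of_tendsto' hlim fun k => key k n)

theorem three_point_lgf (a₀ a₁ : ℝ) (ha₁ : a₁ ≠ 0)
    (lam : ℝ) (hlam : lam = -a₀ / (2 * a₁)) (hlam1 : 1 < lam)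
    (r : ℝ) (hr : r = lam - Real.sqrt (lam ^ 2 - 1))
    (G : ℤ → ℝ) (hG : ∀ n : ℤ, G n = r ^ n.natAbs / (a₁ * (r - r⁻¹))) :
    r ∈ Set.Ioo (0 : ℝ) 1 ∧
    (∀ n : ℤ, a₁ * G (n - 1) + a₀ * G n + a₁ * G (n + 1) =
      if n = 0 then 1 else 0) ∧
    (∀ H : ℤ → ℝ, (∃ M : ℝ, ∀ n : ℤ, |H n| ≤ M) →
      (∀ n : ℤ, a₁ * H (n - 1) + a₀ * H n + a₁ * H (n + 1) =
        if n = 0 then 1 else 0) →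
      H = G) := by
  have hs : Real.sqrt (lam ^ 2 - 1) ^ 2 = lam ^ 2 - 1 := Real.sq_sqrt (by nlinarith)
  have hs0 := Real.sqrt_nonneg (lam ^ 2 - 1)
  have hquad : r ^ 2 + 1 = 2 * lam * r := by rw [hr]; linarith
  have hr0 : 0 < r := by nlinarith [sq_nonneg r]
  have hr1 : r < 1 := by
    -- `r * (2λ - r) = 1` and `2λ - r ≥ λ > 1` because `r ≤ λ`, so `r ≥ 1` is impossible
    by_contra! h
    nlinarith
  have ha₀ : a₀ = -(2 * lam * a₁) := by rw [hlam]; field_simp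
  have hc : a₁ * (r - r⁻¹) ≠ 0 := by
    have : 1 < r⁻¹ := (one_lt_inv₀ hr0).2 hr1
    exact mul_ne_zero ha₁ (by linarith)
  have hGeq : ∀ n : ℤ, a₁ * G (n - 1) + a₀ * G n + a₁ * G (n + 1) =
      if n = 0 then 1 else 0 := by
    intro n
    have hpow : ∀ k : ℕ, r ^ k - 2 * lam * r ^ (k + 1) + r ^ (k + 2) = 0 := fun k => by
      linear_combination r ^ k * hquad
    rw [hG, hG, hG, ha₀]
    rcases lt_trichotomy n 0 with hn | hn | hn
    · obtain ⟨k, rfl⟩ : ∃ k : ℕ, n = -(k + 1 : ℤ) := ⟨(-n - 1).toNat, by omega⟩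
      rw [if_neg hn.ne, show (-(k + 1 : ℤ) - 1).natAbs = k + 2 by omega,
        show (-(k + 1 : ℤ)).natAbs = k + 1 by omega,
        show (-(k + 1 : ℤ) + 1).natAbs = k by omega]
      linear_combination a₁ / (a₁ * (r - r⁻¹)) * hpow k
    · subst hn
      have hinv : 2 * lam = r + r⁻¹ := by field_simp; linarith
      rw [hinv, if_pos rfl]
      simp only [zero_sub, zero_add, Int.natAbs_neg, Int.natAbs_one, Int.natAbs_zero, pow_one,
        pow_zero]
      linear_combination div_self hc
    · obtain ⟨k, rfl⟩ : ∃ k : ℕ, n = (k + 1 : ℤ) := ⟨(n - 1).toNat, by omega⟩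
      rw [if_neg hn.ne', show ((k + 1 : ℤ) - 1).natAbs = k by omega,
        show (k + 1 : ℤ).natAbs = k + 1 by omega,
        show ((k + 1 : ℤ) + 1).natAbs = k + 2 by omega]
      linear_combination a₁ / (a₁ * (r - r⁻¹)) * hpow k
  refine ⟨⟨hr0, hr1⟩, hGeq, ?_⟩
  rintro H ⟨M, hM⟩ hH
  have hGb : ∀ n, |G n| ≤ 1 / |a₁ * (r - r⁻¹)| := fun n => by
    rw [hG, abs_div, abs_of_pos (pow_pos hr0 _)]
    gcongr
    exact pow_le_one₀ hr0.le hr1.le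
  funext n
  refine sub_eq_zero.1 (bounded_homogeneous_eq_zero (D := fun n => H n - G n) hlam1
    (M := M + 1 / |a₁ * (r - r⁻¹)|)
    (fun n => (abs_sub _ _).trans (add_le_add (hM n) (hGb n))) (fun n => ?_) n)
  apply mul_left_cancel₀ ha₁
  have h := (hH n).trans (hGeq n).symm
  rw [ha₀] at h
  linear_combination h
end

section
/- Let r = 7 − 4√3 and K = 12r² / ((r − 1)³·(r + 1)), and define G: ℤ → ℝ by G(n) = −|n|/2 + K·(r^{|n|} − 1). Then for every n ∈ ℤ, (1/12)·G(n−2) − (4/3)·G(n−1) + (5/2)·G(n) − (4/3)·G(n+1) + (1/12)·G(n+2) = δ(n). In other words, G is a lattice Green's function of the fourth-order dimension-split stencil at zero transverse wavenumber. -/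
open Real

/-!
Write `s = √3`. The number `r = 7 - 4 s` satisfies `r ^ 2 = 14 r - 1`, and the constant `K` simplifies
to `-s / 24` (`lgf4_const_eq`). The symbol of the stencil is `(z - 1) ^ 2 (z ^ 2 - 14 z + 1) / (12 z ^ 2)`,
so the stencil annihilates constants, linear functions and `n ↦ r ^ n`. For `|n| ≥ 2` all five sample
points lie on one side of the kink of `|n|`, hence the result is `0`. At `n = 0` and `n = ±1` the
claim is a direct computation in `ℚ(√3)`; the value of `K` is exactly the one making it hold.
-/

theorem lgf4_const_eq (s : ℝ) (hs : s ^ 2 = 3) :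
    12 * (7 - 4 * s) ^ 2 / ((7 - 4 * s - 1) ^ 3 * (7 - 4 * s + 1)) = -s / 24 := by
  have h1 : 7 - 4 * s - 1 ≠ 0 := by
    intro h
    have h' : s = 3 / 2 := by linarith
    rw [h'] at hs
    norm_num at hs
  have h2 : 7 - 4 * s + 1 ≠ 0 := by
    intro h
    have h' : s = 2 := by linarith
    rw [h'] at hs
    norm_num at hs
  rw [div_eq_iff (mul_ne_zero (pow_ne_zero 3 h1) h2)]
  grind

theorem lgf4_zero_wavenumber
    (r K : ℝ) (hr : r = 7 - 4 * Real.sqrt 3)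
    (hK : K = 12 * r ^ 2 / ((r - 1) ^ 3 * (r + 1)))
    (G : ℤ → ℝ) (hG : ∀ n : ℤ, G n = -(n.natAbs : ℝ) / 2 + K * (r ^ n.natAbs - 1)) :
    ∀ n : ℤ,
      (1 / 12) * G (n - 2) - (4 / 3) * G (n - 1) + (5 / 2) * G n
        - (4 / 3) * G (n + 1) + (1 / 12) * G (n + 2) =
      if n = 0 then 1 else 0 := by
  have hs : Real.sqrt 3 ^ 2 = 3 := Real.sq_sqrt (by norm_num)
  generalize Real.sqrt 3 = s at hr hs
  have hK' : K = -s / 24 := by rw [hK, hr, lgf4_const_eq s hs]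
  have hr2 : r ^ 2 = 14 * r - 1 := by rw [hr]; linear_combination 16 * hs
  have hval : ∀ (n : ℤ) (m : ℕ), n.natAbs = m → G n = -(m : ℝ) / 2 + K * (r ^ m - 1) := by
    intro n m h
    rw [hG, h]
  -- Away from the kink, the stencil acts on `r ^ k` through the factor `r ^ 2 - 14 r + 1`.
  have hfar : ∀ k : ℕ, (1 / 12) * r ^ k - (4 / 3) * r ^ (k + 1) + (5 / 2) * r ^ (k + 2)
      - (4 / 3) * r ^ (k + 3) + (1 / 12) * r ^ (k + 4) = 0 := by
    intro k
    linear_combination (r ^ k * (r - 1) ^ 2 / 12) * hr2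
  intro n
  obtain h | h | h | h | h : n = 0 ∨ n = 1 ∨ n = -1 ∨ (∃ k : ℕ, n = k + 2) ∨
      ∃ k : ℕ, n = -(k + 2 : ℤ) := by
    by_cases h0 : 2 ≤ n
    · exact .inr (.inr (.inr (.inl ⟨(n - 2).toNat, by omega⟩)))
    by_cases h1 : n ≤ -2
    · exact .inr (.inr (.inr (.inr ⟨(-n - 2).toNat, by omega⟩)))
    omega
  · subst h
    rw [hval (0 - 2) 2 rfl, hval (0 - 1) 1 rfl, hval 0 0 rfl, hval (0 + 1) 1 rfl,
      hval (0 + 2) 2 rfl, if_pos rfl, hK', hr]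
    push_cast
    grind
  · subst h
    rw [hval (1 - 2) 1 rfl, hval (1 - 1) 0 rfl, hval 1 1 rfl, hval (1 + 1) 2 rfl,
      hval (1 + 2) 3 rfl, if_neg (by norm_num), hK', hr]
    push_cast
    grind
  · subst h
    rw [hval (-1 - 2) 3 rfl, hval (-1 - 1) 2 rfl, hval (-1) 1 rfl, hval (-1 + 1) 0 rfl,
      hval (-1 + 2) 1 rfl, if_neg (by norm_num), hK', hr]
    push_cast
    grind
  · obtain ⟨k, rfl⟩ := h
    rw [hval _ k (by omega), hval _ (k + 1) (by omega), hval _ (k + 2) (by omega),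
      hval _ (k + 3) (by omega), hval _ (k + 4) (by omega), if_neg (by omega)]
    push_cast
    linear_combination K * hfar k
  · obtain ⟨k, rfl⟩ := h
    rw [hval _ (k + 4) (by omega), hval _ (k + 3) (by omega), hval _ (k + 2) (by omega),
      hval _ (k + 1) (by omega), hval _ k (by omega), if_neg (by omega)]
    push_cast
    linear_combination K * hfar k
end

section
/- Fix c with 0 < c < 3, set λ± = 4 ± √(9 − 3c) and r± = λ± − √(λ±² − 1) (so r₊ ≠ r₋, both in (0,1)), and define G: ℤ → ℝ by G(n) = (f_n(r₊) − f_n(r₋)) / (r₊ − r₋), where f_n(z) = 12·z^{|n|+1} / ((z − 1/r₊)·(z − 1/r₋)). Then for every n ∈ ℤ, (1/12)·G(n−2) − (4/3)·G(n−1) + (5/2 + c)·G(n) − (4/3)·G(n+1) + (1/12)·G(n+2) = δ(n). -/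
/-!
With `w = z + 1/z` the characteristic polynomial becomes `(w² - 16 w + 28 + 12 c) / 12`, whose roots
are `w = 2 λ±`; so `r±` and `1 / r± = λ± + √(λ±² - 1)` are its four roots `z` (`lgf4_root`).

Write `a = r₊`, `b = r₋`, so that `G n = α a^|n| - β b^|n|`. For `|n| ≥ 2` the stencil only sees one
branch of `|·|` and annihilates both powers. Near the origin it differs from its value on the
one-sided continuation `g m = α a^m - β b^m`, `m ∈ ℤ`, by multiples of `g 1 - g (-1)` and
`g 2 - g (-2)`; the first vanishes and the second equals `12`, which gives `δ`
(`lgf4_stencil`).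
-/

/-- For `λ > 1`, the number `r = λ - √(λ² - 1)` lies in `(0, 1)` and satisfies
`r + r⁻¹ = 2 λ`. -/
lemma lgf4_root {l r : ℝ} (hl : 1 < l) (hr : r = l - Real.sqrt (l ^ 2 - 1)) :
    0 < r ∧ r < 1 ∧ r + r⁻¹ = 2 * l := by
  have hpos : 0 < l ^ 2 - 1 := by nlinarith
  have hs := Real.sq_sqrt hpos.le
  have hs0 := Real.sqrt_pos.mpr hpos
  set s := Real.sqrt (l ^ 2 - 1)
  have hprod : r * (l + s) = 1 := by rw [hr]; linear_combination -hs
  have hr0 : 0 < r := by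
    rw [hr]; nlinarith
  refine ⟨hr0, ?_, ?_⟩
  · rw [hr]; nlinarith
  · rw [inv_eq_of_mul_eq_one_right hprod, hr]; ring

/-- The stencil applied to `n ↦ α a^|n| - β b^|n|`, where `i = a⁻¹`, `j = b⁻¹`, and `a`, `b` are roots
of the characteristic polynomial. The hypotheses `h1` and `h2` say that the continuation
`g m = α a^m - β b^m` has `g 1 = g (-1)` and `g 2 - g (-2) = 12`. -/
lemma lgf4_stencil {c a b i j α β : ℝ} (hi : a * i = 1) (hj : b * j = 1)
    (ha : (1 / 12) * (a ^ 2 + i ^ 2) - (4 / 3) * (a + i) + 5 / 2 + c = 0)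
    (hb : (1 / 12) * (b ^ 2 + j ^ 2) - (4 / 3) * (b + j) + 5 / 2 + c = 0)
    (h1 : α * (a - i) = β * (b - j))
    (h2 : α * (a ^ 2 - i ^ 2) - β * (b ^ 2 - j ^ 2) = 12)
    (G : ℤ → ℝ) (hG : ∀ n : ℤ, G n = α * a ^ n.natAbs - β * b ^ n.natAbs) (n : ℤ) :
    (1 / 12) * G (n - 2) - (4 / 3) * G (n - 1) + (5 / 2 + c) * G n
        - (4 / 3) * G (n + 1) + (1 / 12) * G (n + 2) =
      if n = 0 then 1 else 0 := by
  have hQA : (1 / 12) * (a ^ 4 + 1) - (4 / 3) * (a ^ 3 + a) + (5 / 2 + c) * a ^ 2 = 0 := by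
    linear_combination a ^ 2 * ha - (1 / 12 * (a * i + 1) - 4 / 3 * a) * hi
  have hQB : (1 / 12) * (b ^ 4 + 1) - (4 / 3) * (b ^ 3 + b) + (5 / 2 + c) * b ^ 2 = 0 := by
    linear_combination b ^ 2 * hb - (1 / 12 * (b * j + 1) - 4 / 3 * b) * hj
  have heven : ∀ n : ℤ, G (-n) = G n := fun n => by rw [hG, hG, Int.natAbs_neg]
  have hnat : ∀ m : ℕ, G m = α * a ^ m - β * b ^ m := fun m => by rw [hG, Int.natAbs_natCast]
  have g0 := hnat 0
  have g1 := hnat 1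
  have g2 := hnat 2
  have g3 := hnat 3
  have e1 := heven 1
  have e2 := heven 2
  push_cast at g0 g1 g2 g3
  have main1 : (1 / 12) * G 1 - (4 / 3) * G 0 + (5 / 2 + c) * G 1
        - (4 / 3) * G 2 + (1 / 12) * G 3 = 0 := by
    rw [g0, g1, g2, g3]
    linear_combination α * a * ha - β * b * hb + (1 / 12) * h1
      - α * (1 / 12 * i - 4 / 3) * hi + β * (1 / 12 * j - 4 / 3) * hj
  have main2 : ∀ m : ℕ, (1 / 12) * G m - (4 / 3) * G (m + 1 : ℕ) + (5 / 2 + c) * G (m + 2 : ℕ)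
        - (4 / 3) * G (m + 3 : ℕ) + (1 / 12) * G (m + 4 : ℕ) = 0 := by
    intro m
    simp only [hnat]
    linear_combination α * a ^ m * hQA - β * b ^ m * hQB
  -- By evenness of `G` it suffices to treat `n ≥ 0`.
  have hnn : ∀ k : ℕ, (1 / 12) * G (k - 2) - (4 / 3) * G (k - 1) + (5 / 2 + c) * G k
        - (4 / 3) * G (k + 1) + (1 / 12) * G (k + 2) = if (k : ℤ) = 0 then 1 else 0 := by
    intro k
    match k with
    | 0 =>
      norm_num
      rw [e1, e2, g0, g1, g2]
      linear_combination α * ha - β * hb + (1 / 12) * h2 - 4 / 3 * h1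
    | 1 =>
      norm_num
      rw [e1]
      linear_combination main1
    | m + 2 =>
      have h := main2 m
      rw [if_neg (by omega)]
      push_cast at h ⊢
      ring_nf at h ⊢
      exact h
  obtain ⟨k, rfl | rfl⟩ := n.eq_nat_or_neg
  · exact hnn k
  · have h := hnn k
    rw [← heven (k - 2), ← heven (k - 1), ← heven k, ← heven (k + 1), ← heven (k + 2)] at h
    simp only [neg_eq_zero]
    rw [← h]
    ring_nf

theorem lgf4_one_unbounded (c : ℝ) (hc0 : 0 < c) (hc3 : c < 3)
    (lamp lamm rp rm : ℝ)
    (hlamp : lamp = 4 + Real.sqrt (9 - 3 * c))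
    (hlamm : lamm = 4 - Real.sqrt (9 - 3 * c))
    (hrp : rp = lamp - Real.sqrt (lamp ^ 2 - 1))
    (hrm : rm = lamm - Real.sqrt (lamm ^ 2 - 1))
    (f : ℤ → ℝ → ℝ)
    (hf : ∀ (n : ℤ) (z : ℝ), f n z = 12 * z ^ (n.natAbs + 1) / ((z - 1 / rp) * (z - 1 / rm)))
    (G : ℤ → ℝ) (hG : ∀ n : ℤ, G n = (f n rp - f n rm) / (rp - rm)) :
    rp ≠ rm ∧ rp ∈ Set.Ioo (0 : ℝ) 1 ∧ rm ∈ Set.Ioo (0 : ℝ) 1 ∧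
    ∀ n : ℤ,
      (1 / 12) * G (n - 2) - (4 / 3) * G (n - 1) + (5 / 2 + c) * G n
        - (4 / 3) * G (n + 1) + (1 / 12) * G (n + 2) =
      if n = 0 then 1 else 0 := by
  have hpos : 0 < 9 - 3 * c := by linarith
  have hs := Real.sq_sqrt hpos.le
  have hs0 := Real.sqrt_pos.mpr hpos
  set s := Real.sqrt (9 - 3 * c)
  have hs3 : s < 3 := by nlinarith
  obtain ⟨hp0, hp1, hp⟩ := lgf4_root (by linarith) hrp
  obtain ⟨hm0, hm1, hm⟩ := lgf4_root (by linarith) hrm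
  have hne : rp ≠ rm := by
    intro h
    rw [h] at hp
    linarith
  refine ⟨hne, ⟨hp0, hp1⟩, ⟨hm0, hm1⟩, ?_⟩
  clear hrp hrm
  have hi : rp * rp⁻¹ = 1 := mul_inv_cancel₀ hp0.ne'
  have hj : rm * rm⁻¹ = 1 := mul_inv_cancel₀ hm0.ne'
  have hip : 1 < rp⁻¹ := (one_lt_inv₀ hp0).2 hp1
  have him : 1 < rm⁻¹ := (one_lt_inv₀ hm0).2 hm1
  have d1 : rp - rp⁻¹ ≠ 0 := by linarith
  have d2 : rp - rm⁻¹ ≠ 0 := by linarith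
  have d3 : rm - rp⁻¹ ≠ 0 := by linarith
  have d4 : rm - rm⁻¹ ≠ 0 := by linarith
  have d5 : rp - rm ≠ 0 := sub_ne_zero.2 hne
  have hab : rm * (rp - rm⁻¹) = rp * (rm - rp⁻¹) := by linear_combination hi - hj
  -- The common value `α (a - a⁻¹) = β (b - b⁻¹)`.
  have hα : 12 * rp / ((rp - rp⁻¹) * (rp - rm⁻¹)) / (rp - rm) * (rp - rp⁻¹)
      = 12 * rp / ((rp - rm⁻¹) * (rp - rm)) := by
    generalize rp - rp⁻¹ = x at *
    field_simp
  have hβ : 12 * rm / ((rm - rp⁻¹) * (rm - rm⁻¹)) / (rp - rm) * (rm - rm⁻¹)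
      = 12 * rp / ((rp - rm⁻¹) * (rp - rm)) := by
    generalize rm - rm⁻¹ = x at *
    generalize rm - rp⁻¹ = y at *
    generalize rp - rm⁻¹ = z at *
    field_simp
    linear_combination hab
  have hγ : 12 * rp / ((rp - rm⁻¹) * (rp - rm)) * ((rp + rp⁻¹) - (rm + rm⁻¹)) = 12 := by
    have : rp * ((rp + rp⁻¹) - (rm + rm⁻¹)) = (rp - rm⁻¹) * (rp - rm) := by
      linear_combination hi - hj
    rw [div_mul_eq_mul_div, mul_assoc, this, mul_div_assoc, div_self (mul_ne_zero d2 d5), mul_one]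
  refine lgf4_stencil (α := 12 * rp / ((rp - rp⁻¹) * (rp - rm⁻¹)) / (rp - rm))
    (β := 12 * rm / ((rm - rp⁻¹) * (rm - rm⁻¹)) / (rp - rm)) hi hj ?_ ?_ (hα.trans hβ.symm) ?_ G ?_
  · rw [hlamp] at hp
    linear_combination (1 / 12) * (rp + rp⁻¹ + 2 * (4 + s) - 16) * hp - (1 / 6) * hi + (1 / 3) * hs
  · rw [hlamm] at hm
    linear_combination (1 / 12) * (rm + rm⁻¹ + 2 * (4 - s) - 16) * hm - (1 / 6) * hj + (1 / 3) * hs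
  · linear_combination (rp + rp⁻¹) * hα - (rm + rm⁻¹) * hβ + hγ
  · intro n
    rw [hG, hf, hf, one_div, one_div]
    ring
end

section
/- Let r̄ = 4 − √15 and define G: ℤ → ℝ by G(n) = r̄^{|n|}·( 4/(5√15) + |n|/5 ). Then for every n ∈ ℤ, (1/12)·G(n−2) − (4/3)·G(n−1) + (11/2)·G(n) − (4/3)·G(n+1) + (1/12)·G(n+2) = δ(n). In other words, G is the lattice Green's function of the fourth-order dimension-split stencil at the critical transverse symbol value c* = 3, at which the characteristic polynomial has the repeated root r̄ inside the unit circle. -/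
/-!
Since `r̄² = 8 r̄ - 1`, the characteristic polynomial
`(r⁴ - 16 r³ + 66 r² - 16 r + 1) / 12 = (r² - 8 r + 1)² / 12` has `r̄` as a double root, so every
sequence `r̄ ^ k * (a + b k)` is annihilated by the stencil. This settles `n ≥ 2`, where the stencil
does not see the absolute value. The cases `n = 0` and `n = 1` are identities in `ℚ(√15)`; they are
the two equations that fix the coefficients `4 / (5 √15)` and `1 / 5`. Negative `n` follow because
`G` is even and the stencil is symmetric.
-/

open Real

/-- A double root `r` of the characteristic polynomial yields the solutions `r ^ k * (A + k / 5)`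
of the homogeneous recurrence. -/
lemma stencil_double_root (r A : ℝ) (hr : r ^ 2 = 8 * r - 1) (k : ℕ) :
    (1 / 12) * (r ^ k * (A + (k : ℝ) / 5))
      - (4 / 3) * (r ^ (k + 1) * (A + ((k : ℝ) + 1) / 5))
      + (11 / 2) * (r ^ (k + 2) * (A + ((k : ℝ) + 2) / 5))
      - (4 / 3) * (r ^ (k + 3) * (A + ((k : ℝ) + 3) / 5))
      + (1 / 12) * (r ^ (k + 4) * (A + ((k : ℝ) + 4) / 5)) = 0 := by
  -- With `p = r² - 8 r + 1` and `q = 2 p (2 r - 8)` the derivative of `p²`, the left side is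
  -- `r ^ k * ((A + k / 5) * p² + (r / 5) * q) / 12`, a multiple of `p`.
  linear_combination
    r ^ k / 12 * ((A + (k : ℝ) / 5) * (r ^ 2 - 8 * r + 1) + r / 5 * (2 * (2 * r - 8))) * hr

theorem lgf4_critical_wavenumber
    (rbar : ℝ) (hrbar : rbar = 4 - Real.sqrt 15)
    (G : ℤ → ℝ)
    (hG : ∀ n : ℤ, G n = rbar ^ n.natAbs * (4 / (5 * Real.sqrt 15) + (n.natAbs : ℝ) / 5)) :
    ∀ n : ℤ,
      (1 / 12) * G (n - 2) - (4 / 3) * G (n - 1) + (11 / 2) * G n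
        - (4 / 3) * G (n + 1) + (1 / 12) * G (n + 2) =
      if n = 0 then 1 else 0 := by
  have hs : Real.sqrt 15 ^ 2 = 15 := Real.sq_sqrt (by norm_num)
  have hs0 : Real.sqrt 15 ≠ 0 := by positivity
  have hA : 4 / (5 * Real.sqrt 15) = 4 * Real.sqrt 15 / 75 := by
    field_simp
    linarith
  rw [hA] at hG
  have hr : rbar ^ 2 = 8 * rbar - 1 := by
    rw [hrbar]
    linear_combination hs
  have hEven (n : ℤ) : G (-n) = G n := by rw [hG, hG, Int.natAbs_neg]
  have hNat (k : ℕ) : G k = rbar ^ k * (4 * Real.sqrt 15 / 75 + (k : ℝ) / 5) := by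
    rw [hG, Int.natAbs_natCast]
  have h0 := hNat 0
  have h1 := hNat 1
  have h2 := hNat 2
  have h3 := hNat 3
  have hm1 := hEven 1
  have hm2 := hEven 2
  push_cast at h0 h1 h2 h3
  have hNonneg (m : ℕ) :
      (1 / 12) * G ((m : ℤ) - 2) - (4 / 3) * G ((m : ℤ) - 1) + (11 / 2) * G m
        - (4 / 3) * G ((m : ℤ) + 1) + (1 / 12) * G ((m : ℤ) + 2) =
      if (m : ℤ) = 0 then 1 else 0 := by
    match m with
    | 0 =>
      norm_num
      rw [hm1, hm2, h0, h1, h2]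
      grind
    | 1 =>
      norm_num
      rw [hm1, h0, h1, h2, h3]
      grind
    | k + 2 =>
      have e0 : ((k + 2 : ℕ) : ℤ) - 2 = (k : ℕ) := by push_cast; ring
      have e1 : ((k + 2 : ℕ) : ℤ) - 1 = (k + 1 : ℕ) := by push_cast; ring
      have e3 : ((k + 2 : ℕ) : ℤ) + 1 = (k + 3 : ℕ) := by push_cast; ring
      have e4 : ((k + 2 : ℕ) : ℤ) + 2 = (k + 4 : ℕ) := by push_cast; ring
      rw [e0, e1, e3, e4, if_neg (by omega)]
      simp only [hNat]
      push_cast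
      exact stencil_double_root rbar _ hr k
  intro n
  obtain ⟨m, rfl | rfl⟩ := n.eq_nat_or_neg
  · exact hNonneg m
  · have e0 : -(m : ℤ) - 2 = -((m : ℤ) + 2) := by ring
    have e1 : -(m : ℤ) - 1 = -((m : ℤ) + 1) := by ring
    have e3 : -(m : ℤ) + 1 = -((m : ℤ) - 1) := by ring
    have e4 : -(m : ℤ) + 2 = -((m : ℤ) - 2) := by ring
    rw [e0, e1, e3, e4]
    simp only [hEven, neg_eq_zero]
    rw [← hNonneg m]
    ring
end

section
/- For every real c the discriminant quantity 36c² − 155c + 405 is strictly positive, and the quantity 360c − 775 + 60·√(36c² − 155c + 405) is nonzero. Letting ξ denote its real cube root and setting λ = (1/4)·(9 + ξ − 95/ξ), the number λ is a real root of the cubic 4λ³ − 27λ² + 132λ − (109 + 45c) = 0. -/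
open Real

/-!
Write `A = 360 c - 775` and `B = 60 √(36 c² - 155 c + 405)`. The argument is Cardano's formula: with
`t = ξ - η`, `η = 95 / ξ`, the substitution `λ = (9 + t) / 4` turns the cubic into
`t³ + 285 t = 2 A`, and `ξ η = 95` gives `t³ + 285 t = ξ³ - η³`. The identity
`(B + A) (B - A) = 95³` shows both that `A + B ≠ 0` and that `ξ³ = A + B` forces `η³ = B - A`,
so `ξ³ - η³ = 2 A`.
-/

theorem lgf6_cubic_root_formula (c : ℝ) :
    0 < 36 * c ^ 2 - 155 * c + 405 ∧
    360 * c - 775 + 60 * Real.sqrt (36 * c ^ 2 - 155 * c + 405) ≠ 0 ∧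
    ∀ ξ : ℝ, ξ ^ 3 = 360 * c - 775 + 60 * Real.sqrt (36 * c ^ 2 - 155 * c + 405) →
      4 * ((1 / 4) * (9 + ξ - 95 / ξ)) ^ 3 - 27 * ((1 / 4) * (9 + ξ - 95 / ξ)) ^ 2
        + 132 * ((1 / 4) * (9 + ξ - 95 / ξ)) - (109 + 45 * c) = 0 := by
  have hpos : 0 < 36 * c ^ 2 - 155 * c + 405 := by
    nlinarith [sq_nonneg (72 * c - 155)]
  have hsq := Real.sq_sqrt hpos.le
  set s := Real.sqrt (36 * c ^ 2 - 155 * c + 405)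
  have hprod : (360 * c - 775 + 60 * s) * (60 * s - (360 * c - 775)) = 95 ^ 3 := by
    linear_combination 3600 * hsq
  have hne : 360 * c - 775 + 60 * s ≠ 0 := by
    intro h
    rw [h] at hprod
    norm_num at hprod
  refine ⟨hpos, hne, fun ξ hξ => ?_⟩
  have hξ0 : ξ ≠ 0 := by
    rintro rfl
    exact hne (by rw [← hξ]; norm_num)
  have hmul : ξ * (95 / ξ) = 95 := mul_div_cancel₀ 95 hξ0
  generalize 95 / ξ = η at hmul ⊢
  have hη : η ^ 3 = 60 * s - (360 * c - 775) := by
    apply mul_left_cancel₀ hne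
    rw [hprod, ← hξ, ← mul_pow, hmul]
  linear_combination (1 / 16) * hξ - (1 / 16) * hη - (3 / 16) * (ξ - η) * hmul
end

section
/- The function k ↦ 1 / (4·(sin²(k₁/2) + sin²(k₂/2) + sin²(k₃/2))) is Lebesgue integrable on [−π, π]³, and the function G: ℤ³ → ℝ defined by the absolutely convergent integral G(n) = (2π)⁻³ ∫_{[−π,π]³} cos(n·k) / (4·(sin²(k₁/2) + sin²(k₂/2) + sin²(k₃/2))) dk satisfies, for every n ∈ ℤ³, Σ_{i=1}^{3} ( 2·G(n) − G(n + eᵢ) − G(n − eᵢ) ) = δ(n), where eᵢ are the standard basis vectors of ℤ³. That is, G is a lattice Green's function for the second-order centered discretization of −∇² on the fully unbounded 3D lattice. -/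
/-!
On the box `[-π, π]³`, Jordan's inequality `|sin x| ≥ (2 / π) |x|` for `|x| ≤ π / 2` gives
`sigmaL2 k ≥ (4 / π²) ‖k‖²` for the sup norm (`sigmaL2_lower_bound`). Hence `1 / sigmaL2` is
dominated by a multiple of `‖k‖⁻²`, which is integrable near the origin in dimension three by
integration in
polar coordinates (`integrable_inv_norm_sq_cutoff`); multiplying by a cosine preserves integrability.

The discrete Laplacian applied to `n ↦ cos (n · k)` multiplies it by `sigmaL2 k` (`laplacian_cos`).
By linearity of the integral, the discrete Laplacian of `lgf2` at `n` is therefore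
`(2π)⁻³ ∫ cos (n · k) dk`, the symbol cancelling off the null set `{0}`. This last integral is the
real part of a product of one-dimensional integrals of characters, so it is `(2π)³` for `n = 0` and
vanishes otherwise (`integral_cos_box`).
-/

open Real MeasureTheory

/-- Fourier symbol of the second-order centered discretization of −∇² on ℤ³. -/
noncomputable def sigmaL2 (k : Fin 3 → ℝ) : ℝ :=
  4 * ∑ i : Fin 3, Real.sin (k i / 2) ^ 2

/-- The second-order lattice Green's function on the fully unbounded 3D lattice. -/
noncomputable def lgf2 (n : Fin 3 → ℤ) : ℝ :=
  ((2 * π) ^ 3)⁻¹ *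
    ∫ k in Set.univ.pi fun _ : Fin 3 => Set.Icc (-π) π,
      Real.cos (∑ i : Fin 3, (n i : ℝ) * k i) / sigmaL2 k

/-- Jordan's inequality applied to a coordinate of largest absolute value, `‖k‖` being the sup norm. -/
lemma sigmaL2_lower_bound {k : Fin 3 → ℝ}
    (hk : k ∈ Set.univ.pi fun _ : Fin 3 => Set.Icc (-π) π) :
    4 / π ^ 2 * ‖k‖ ^ 2 ≤ sigmaL2 k := by
  have hnn : ∀ i, 0 ≤ Real.sin (k i / 2) ^ 2 := fun i => sq_nonneg _
  obtain ⟨i, hi⟩ : ∃ i, ‖k‖ = ‖k i‖ := by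
    obtain ⟨i, -, hi⟩ := Finset.exists_mem_eq_sup Finset.univ Finset.univ_nonempty
      (fun i => ‖k i‖₊)
    exact ⟨i, by rw [Pi.norm_def, hi]; rfl⟩
  have hki : |k i / 2| ≤ π / 2 := by
    have h := hk i (Set.mem_univ i)
    rw [abs_le]
    constructor <;> linarith [h.1, h.2]
  have hjordan := Real.mul_abs_le_abs_sin hki
  have hsq : (2 / π * |k i / 2|) ^ 2 ≤ Real.sin (k i / 2) ^ 2 := by
    rw [← sq_abs (Real.sin _)]
    gcongr
  have hsum : Real.sin (k i / 2) ^ 2 ≤ ∑ j : Fin 3, Real.sin (k j / 2) ^ 2 :=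
    Finset.single_le_sum (f := fun j => Real.sin (k j / 2) ^ 2)
      (fun j _ => hnn j) (Finset.mem_univ i)
  have heq : 4 / π ^ 2 * ‖k‖ ^ 2 = 4 * (2 / π * |k i / 2|) ^ 2 := by
    rw [hi, Real.norm_eq_abs, abs_div, abs_two]
    field_simp
  rw [heq, sigmaL2]
  linarith

lemma sigmaL2_pos {k : Fin 3 → ℝ}
    (hk : k ∈ Set.univ.pi fun _ : Fin 3 => Set.Icc (-π) π) (h0 : k ≠ 0) :
    0 < sigmaL2 k := by
  have : 0 < ‖k‖ := norm_pos_iff.2 h0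
  have := Real.pi_pos
  exact lt_of_lt_of_le (by positivity) (sigmaL2_lower_bound hk)

lemma continuous_sigmaL2 : Continuous sigmaL2 := by
  unfold sigmaL2
  fun_prop

lemma measurableSet_box :
    MeasurableSet (Set.univ.pi fun _ : Fin 3 => Set.Icc (-π) π) :=
  MeasurableSet.univ_pi fun _ => measurableSet_Icc

/-- `‖k‖⁻²` is integrable near the origin of `ℝ³`: in polar coordinates the radial
integrand is `r ^ (3 - 1) * r⁻²`, which is constant. -/
lemma integrable_inv_norm_sq_cutoff :
    Integrable (fun k : Fin 3 → ℝ =>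
      (Set.Iic π).indicator (fun r : ℝ => (r ^ 2)⁻¹) ‖k‖) := by
  refine (integrable_fun_norm_addHaar (volume : Measure (Fin 3 → ℝ))
    (f := (Set.Iic π).indicator (fun r : ℝ => (r ^ 2)⁻¹))).2 ?_
  have hone : IntegrableOn ((Set.Iic π).indicator (fun _ : ℝ => (1 : ℝ))) (Set.Ioi 0) := by
    rw [IntegrableOn, integrable_indicator_iff measurableSet_Iic, IntegrableOn,
      Measure.restrict_restrict measurableSet_Iic, Set.inter_comm, Set.Ioi_inter_Iic]
    exact integrableOn_const (by simp)
  refine hone.congr_fun (fun r hr => ?_) measurableSet_Ioi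
  have hr0 : r ≠ 0 := ne_of_gt hr
  by_cases h : r ≤ π <;> simp [Set.indicator, h, hr0]

lemma integrableOn_one_div_sigmaL2 :
    IntegrableOn (fun k : Fin 3 → ℝ => 1 / sigmaL2 k)
      (Set.univ.pi fun _ : Fin 3 => Set.Icc (-π) π) := by
  refine Integrable.mono' (integrable_inv_norm_sq_cutoff.integrableOn.const_mul (π ^ 2 / 4))
    (measurable_const.div continuous_sigmaL2.measurable).aestronglyMeasurable ?_
  filter_upwards [ae_restrict_mem measurableSet_box] with k hk
  have hnorm : ‖k‖ ≤ π := by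
    rw [pi_norm_le_iff_of_nonneg Real.pi_pos.le]
    exact fun i => abs_le.2 (hk i (Set.mem_univ i))
  rw [Set.indicator_of_mem (Set.mem_Iic.2 hnorm)]
  rcases eq_or_ne k 0 with rfl | h0
  · simp [sigmaL2]
  · have hpos := sigmaL2_pos hk h0
    have hn : 0 < ‖k‖ := norm_pos_iff.2 h0
    have hpi := Real.pi_pos
    rw [Real.norm_of_nonneg (by positivity)]
    calc 1 / sigmaL2 k ≤ 1 / (4 / π ^ 2 * ‖k‖ ^ 2) :=
          one_div_le_one_div_of_le (by positivity) (sigmaL2_lower_bound hk)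
      _ = π ^ 2 / 4 * (‖k‖ ^ 2)⁻¹ := by field_simp

lemma integrableOn_cos_div_sigmaL2 (n : Fin 3 → ℤ) :
    IntegrableOn
      (fun k : Fin 3 → ℝ => Real.cos (∑ i : Fin 3, (n i : ℝ) * k i) / sigmaL2 k)
      (Set.univ.pi fun _ : Fin 3 => Set.Icc (-π) π) := by
  refine Integrable.mono integrableOn_one_div_sigmaL2 (Measurable.aestronglyMeasurable
    ((by fun_prop : Continuous fun k : Fin 3 → ℝ =>
      Real.cos (∑ i : Fin 3, (n i : ℝ) * k i)).measurable.div
      continuous_sigmaL2.measurable)) ?_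
  refine Filter.Eventually.of_forall fun k => ?_
  rw [norm_div, norm_div, norm_one]
  gcongr
  exact Real.abs_cos_le_one _

lemma integral_exp_int_mul_I (m : ℤ) :
    ∫ x in Set.Icc (-π) π, Complex.exp (((m : ℝ) * x : ℝ) * Complex.I) =
      if m = 0 then (2 * π : ℂ) else 0 := by
  rw [integral_Icc_eq_integral_Ioc, ← intervalIntegral.integral_of_le (by linarith [Real.pi_pos])]
  split_ifs with h
  · subst h
    simp
    ring
  · have hc : (m : ℂ) * Complex.I ≠ 0 := by simp [h]
    have := integral_exp_mul_complex (a := -π) (b := π) hc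
    have hfun : ∀ x : ℝ, Complex.exp (((m : ℝ) * x : ℝ) * Complex.I) =
        Complex.exp ((m : ℂ) * Complex.I * x) := fun x => by
      congr 1
      push_cast
      ring
    simp_rw [hfun]
    rw [this, div_eq_zero_iff]
    left
    -- the two endpoints differ by the period `m * (2 * π * I)`
    rw [sub_eq_zero, Complex.exp_eq_exp_iff_exists_int]
    exact ⟨m, by push_cast; ring⟩

/-- Orthogonality of the characters of the three-dimensional torus. -/
lemma integral_cos_box (n : Fin 3 → ℤ) :
    ∫ k in Set.univ.pi fun _ : Fin 3 => Set.Icc (-π) π,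
      Real.cos (∑ i : Fin 3, (n i : ℝ) * k i) = if n = 0 then (2 * π) ^ 3 else 0 := by
  have hexp : ∫ k in Set.univ.pi fun _ : Fin 3 => Set.Icc (-π) π,
      Complex.exp ((∑ i : Fin 3, (n i : ℝ) * k i : ℝ) * Complex.I) =
        if n = 0 then ((2 * π) ^ 3 : ℂ) else 0 := by
    have hprod : ∀ k : Fin 3 → ℝ,
        Complex.exp ((∑ i : Fin 3, (n i : ℝ) * k i : ℝ) * Complex.I) =
          ∏ i : Fin 3, Complex.exp (((n i : ℝ) * k i : ℝ) * Complex.I) := fun k => by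
      rw [← Complex.exp_sum, Complex.ofReal_sum, Finset.sum_mul]
    simp_rw [hprod]
    rw [volume_pi, Measure.restrict_pi_pi,
      integral_fintype_prod_eq_prod (𝕜 := ℂ)
        (f := fun i x => Complex.exp (((n i : ℝ) * x : ℝ) * Complex.I))]
    simp_rw [integral_exp_int_mul_I]
    split_ifs with h
    · simp [h]
    · obtain ⟨i, hi⟩ := Function.ne_iff.1 h
      exact Finset.prod_eq_zero (Finset.mem_univ i) (by simpa using hi)
  have hexp_int : IntegrableOn (fun k : Fin 3 → ℝ =>
      Complex.exp ((∑ i : Fin 3, (n i : ℝ) * k i : ℝ) * Complex.I))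
      (Set.univ.pi fun _ : Fin 3 => Set.Icc (-π) π) :=
    (by fun_prop : Continuous _).continuousOn.integrableOn_compact
      (isCompact_univ_pi fun _ => isCompact_Icc)
  have hre := integral_re (𝕜 := ℂ) hexp_int
  rw [hexp] at hre
  simp only [RCLike.re_eq_complex_re, Complex.exp_ofReal_mul_I_re] at hre
  rw [hre]
  split_ifs
  · norm_cast
  · simp

/-- The operator with symbol `sigmaL2` acts on a plane wave by multiplication by its symbol. -/
lemma laplacian_cos (n : Fin 3 → ℤ) (k : Fin 3 → ℝ) :
    ∑ i : Fin 3, (2 * Real.cos (∑ j : Fin 3, (n j : ℝ) * k j) -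
      Real.cos (∑ j : Fin 3, ((n + Pi.single i 1 : Fin 3 → ℤ) j : ℝ) * k j) -
      Real.cos (∑ j : Fin 3, ((n - Pi.single i 1 : Fin 3 → ℤ) j : ℝ) * k j)) =
    Real.cos (∑ j : Fin 3, (n j : ℝ) * k j) * sigmaL2 k := by
  have hadd : ∀ i, ∑ j : Fin 3, ((n + Pi.single i 1 : Fin 3 → ℤ) j : ℝ) * k j =
      ∑ j : Fin 3, (n j : ℝ) * k j + k i := fun i => by
    simp [add_mul, Finset.sum_add_distrib, Pi.single_apply]
  have hsub : ∀ i, ∑ j : Fin 3, ((n - Pi.single i 1 : Fin 3 → ℤ) j : ℝ) * k j =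
      ∑ j : Fin 3, (n j : ℝ) * k j - k i := fun i => by
    simp [sub_mul, Finset.sum_sub_distrib, Pi.single_apply]
  simp_rw [hadd, hsub, sigmaL2, Finset.mul_sum]
  refine Finset.sum_congr rfl fun i _ => ?_
  rw [Real.cos_add, Real.cos_sub, Real.sin_sq_eq_half_sub, mul_div_cancel₀ (k i) two_ne_zero]
  ring

theorem lgf2_integrable_and_solves :
    IntegrableOn (fun k : Fin 3 → ℝ => 1 / sigmaL2 k)
      (Set.univ.pi fun _ : Fin 3 => Set.Icc (-π) π) ∧
    (∀ n : Fin 3 → ℤ, IntegrableOn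
      (fun k : Fin 3 → ℝ => Real.cos (∑ i : Fin 3, (n i : ℝ) * k i) / sigmaL2 k)
      (Set.univ.pi fun _ : Fin 3 => Set.Icc (-π) π)) ∧
    ∀ n : Fin 3 → ℤ,
      (∑ i : Fin 3, (2 * lgf2 n - lgf2 (n + Pi.single i 1) - lgf2 (n - Pi.single i 1))) =
        if n = 0 then 1 else 0 := by
  refine ⟨integrableOn_one_div_sigmaL2, integrableOn_cos_div_sigmaL2, fun n => ?_⟩
  have hI := integrableOn_cos_div_sigmaL2
  have hdiff : ∀ i : Fin 3, IntegrableOn (fun k : Fin 3 → ℝ =>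
      2 * (Real.cos (∑ j : Fin 3, (n j : ℝ) * k j) / sigmaL2 k) -
        Real.cos (∑ j : Fin 3, ((n + Pi.single i 1 : Fin 3 → ℤ) j : ℝ) * k j) / sigmaL2 k)
      (Set.univ.pi fun _ : Fin 3 => Set.Icc (-π) π) :=
    fun i => ((hI n).const_mul 2).sub (hI _)
  have hterm : ∀ i : Fin 3,
      2 * lgf2 n - lgf2 (n + Pi.single i 1) - lgf2 (n - Pi.single i 1) =
      ((2 * π) ^ 3)⁻¹ * ∫ k in Set.univ.pi fun _ : Fin 3 => Set.Icc (-π) π,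
        (2 * (Real.cos (∑ j : Fin 3, (n j : ℝ) * k j) / sigmaL2 k) -
        Real.cos (∑ j : Fin 3, ((n + Pi.single i 1 : Fin 3 → ℤ) j : ℝ) * k j) / sigmaL2 k -
        Real.cos (∑ j : Fin 3, ((n - Pi.single i 1 : Fin 3 → ℤ) j : ℝ) * k j) / sigmaL2 k) := by
    intro i
    rw [integral_sub (hdiff i) (hI _), integral_sub ((hI n).const_mul 2) (hI _), integral_const_mul]
    simp only [lgf2]
    ring
  simp_rw [hterm]
  rw [← Finset.mul_sum, ← integral_finsetSum]
  swap
  · exact fun i _ => (hdiff i).sub (hI (n - Pi.single i 1))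
  have hcancel : ∀ᵐ k ∂(volume.restrict (Set.univ.pi fun _ : Fin 3 => Set.Icc (-π) π)),
      ∑ i : Fin 3, (2 * (Real.cos (∑ j : Fin 3, (n j : ℝ) * k j) / sigmaL2 k) -
        Real.cos (∑ j : Fin 3, ((n + Pi.single i 1 : Fin 3 → ℤ) j : ℝ) * k j) / sigmaL2 k -
        Real.cos (∑ j : Fin 3, ((n - Pi.single i 1 : Fin 3 → ℤ) j : ℝ) * k j) / sigmaL2 k) =
      Real.cos (∑ j : Fin 3, (n j : ℝ) * k j) := by
    -- the symbol vanishes in the box only at the origin, a null set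
    filter_upwards [ae_restrict_mem measurableSet_box,
      ae_restrict_of_ae (Measure.ae_ne volume (0 : Fin 3 → ℝ))] with k hk h0
    have hpos := sigmaL2_pos hk h0
    simp_rw [← mul_div_assoc, ← sub_div]
    rw [← Finset.sum_div, laplacian_cos, mul_div_cancel_right₀ _ hpos.ne']
  rw [integral_congr_ae hcancel, integral_cos_box]
  have hpi := Real.pi_pos
  split_ifs
  · field_simp
  · simp
end
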